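/- Let x ∈ S′_{m,n} be nilpotent, regarded as an (m+2n)×(m+2n) matrix via the ordered basis e_1, …, e_{m+n}, f_1, …, f_n of W (so f_j has index m+n+j). Define, for 1 ≤ i ≤ m+n and 1 ≤ j ≤ n, the vectors ẽ_i = e_i + Σ_{k=1}^{n} (x^k)_{m+n, i} e_{m+n+k} + Σ_{l=1}^{m+n} (x^l)_{m+2n, i} f_{n+l} and f̃_j = f_j + Σ_{k=1}^{n} (x^k)_{m+n, m+n+j} e_{m+n+k} + Σ_{l=1}^{m+n} (x^l)_{m+2n, m+n+j} f_{n+l} in V. Then the subspace L spanned by ẽ_1, …, ẽ_{m+n}, f̃_1, …, f̃_n satisfies: z(L) ⊆ L, the restriction of P to L is an isomorphism onto W, and P(z(v)) = x(P(v)) for every v ∈ L. -/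

import Mathlib

open scoped BigOperators

/-- The coordinate shift: `(shiftMap v) i = v (i+1)`, with the last coordinate sent to `0`. -/
def shiftMap (k : Type*) [Field k] (N : ℕ) : (Fin N → k) →ₗ[k] (Fin N → k) where
  toFun v i := if h : (i : ℕ) + 1 < N then v ⟨(i : ℕ) + 1, h⟩ else 0
  map_add' u v := by funext i; split <;> rename_i h <;> simp [h]
  map_smul' c v := by funext i; split <;> rename_i h <;> simp [h]

/-- The ambient `2(m+2n)`-dimensional space `V`: the first factor holds the coordinates in the
basis `e₁, …, e_{m+2n}`, the second factor those in `f₁, …, f_{m+2n}` (0-indexed). -/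
abbrev VV (k : Type*) [Field k] (m n : ℕ) := (Fin (m + 2*n) → k) × (Fin (m + 2*n) → k)

/-- The nilpotent `z : V → V`, `z eᵢ = eᵢ₋₁`, `z fᵢ = fᵢ₋₁` (with `e₀ = f₀ = 0`). -/
def zmap (k : Type*) [Field k] (m n : ℕ) : VV k m n →ₗ[k] VV k m n :=
  (shiftMap k (m + 2*n)).prodMap (shiftMap k (m + 2*n))

/-- The space `W = span(e₁, …, e_{m+n}, f₁, …, f_n)`, with coordinates indexed by
`Fin (m+2n)`: index `u < m+n` corresponds to `e_{u+1}`, index `u ≥ m+n` to `f_{u-(m+n)+1}`. -/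
abbrev Wt (k : Type*) [Field k] (m n : ℕ) := Fin (m + 2*n) → k

/-- The projection `P : V → W` with `P eᵢ = eᵢ` for `i ≤ m+n`, `P eᵢ = 0` otherwise,
`P fⱼ = fⱼ` for `j ≤ n`, `P fⱼ = 0` otherwise. -/
def Pmap (k : Type*) [Field k] (m n : ℕ) : VV k m n →ₗ[k] Wt k m n where
  toFun v i :=
    if (i : ℕ) < m + n then v.1 i else v.2 ⟨(i : ℕ) - (m + n), by have := i.isLt; omega⟩
  map_add' u v := by funext i; split <;> rename_i h <;> simp [h]
  map_smul' c v := by funext i; split <;> rename_i h <;> simp [h]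

/-- Membership in the slice `S′_{m,n}`: viewing `x` as a matrix in the ordered basis
`e₁, …, e_{m+n}, f₁, …, f_n` of `W`, there are scalars `a, c` (indexed by the `e`-columns)
and `b, d` (indexed by the `f`-columns) with
`x eᵢ = eᵢ₋₁ + aᵢ e_{m+n} + cᵢ f_n` (for `1 ≤ i ≤ m+n`) and
`x fⱼ = fⱼ₋₁ + bⱼ e_{m+n} + dⱼ f_n` (for `1 ≤ j ≤ n`), with `e₀ = f₀ = 0`. -/
def MemS' {k : Type*} [Field k] {m n : ℕ} (hn : 1 ≤ n)
    (x : Matrix (Fin (m + 2*n)) (Fin (m + 2*n)) k) : Prop :=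
  ∃ (a c : Fin (m + n) → k) (b d : Fin n → k),
    ∀ v : Fin (m + 2*n),
      x.mulVec (Pi.single v 1) =
        (if 1 ≤ (v : ℕ) ∧ (v : ℕ) ≠ m + n then
          (Pi.single (⟨(v : ℕ) - 1, by have := v.isLt; omega⟩ : Fin (m + 2*n)) 1 : Wt k m n)
         else 0)
        + (if h : (v : ℕ) < m + n then a ⟨(v : ℕ), h⟩
            else b ⟨(v : ℕ) - (m + n), by have := v.isLt; omega⟩) •
            (Pi.single (⟨m + n - 1, by omega⟩ : Fin (m + 2*n)) 1 : Wt k m n)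
        + (if h : (v : ℕ) < m + n then c ⟨(v : ℕ), h⟩
            else d ⟨(v : ℕ) - (m + n), by have := v.isLt; omega⟩) •
            (Pi.single (⟨m + 2*n - 1, by omega⟩ : Fin (m + 2*n)) 1 : Wt k m n)


/-- The inclusion `ι : W → V` (a section of `P`): basis index `u < m+n` is sent to `e_{u+1}`,
and `u ≥ m+n` to `f_{u-(m+n)+1}`. -/
def iota (k : Type*) [Field k] (m n : ℕ) : Wt k m n →ₗ[k] VV k m n where
  toFun w :=
    (fun i => if (i : ℕ) < m + n then w i else 0,
     fun j => if h : (j : ℕ) + (m + n) < m + 2*n then w ⟨(j : ℕ) + (m + n), h⟩ else 0)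
  map_add' u v := by
    refine Prod.ext ?_ ?_ <;> funext i <;> dsimp only <;> split <;> rename_i h <;> simp [h]
  map_smul' c v := by
    refine Prod.ext ?_ ?_ <;> funext i <;> dsimp only <;> split <;> rename_i h <;> simp [h]

/-!
In 0-indexed coordinates, the rows of `x ∈ S′_{m,n}` other than the last of each block shift
coordinates down by one: `(x w)_p = w_{p+1}`. Iterating from the top of the blocks,
`(x^p w)_0` and `(x^p w)_{m+n}` read off the coordinates of `w` along `e_{p+1}` and `f_{p+1}`
while `p` stays in the block, and afterwards they are the powers of `x` occurring in `ẽᵢ` and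
`f̃ⱼ`. Hence `L` is the range of the map sending `w` to the two sequences `p ↦ (x^p w)_0` and
`p ↦ (x^p w)_{m+n}`. Applying `x` to `w` shifts these sequences, which is what `z` does; at the
end of the sequences this uses `x^(m+2n) = 0`.
-/

theorem pow_finrank_eq_zero_of_isNilpotent {R M : Type*} [CommRing R] [IsDomain R]
    [AddCommGroup M] [Module R M] [Module.Finite R M] [Module.Free R M] {f : Module.End R M}
    (hf : IsNilpotent f) : f ^ Module.finrank R M = 0 := by
  simpa [hf.charpoly_eq_X_pow_finrank] using f.aeval_self_charpoly

/-- The observability map of a functional `φ` along `f`: it records the first `N` readings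
`φ w, φ (f w), φ (f² w), …` of the `f`-orbit of `w`. -/
def observabilityMap {R M : Type*} [CommSemiring R] [AddCommMonoid M] [Module R M]
    (φ : Module.Dual R M) (f : Module.End R M) (N : ℕ) : M →ₗ[R] (Fin N → R) :=
  LinearMap.pi fun p ↦ φ ∘ₗ f ^ (p : ℕ)

theorem shiftMap_observabilityMap {k M : Type*} [Field k] [AddCommMonoid M] [Module k M]
    (φ : Module.Dual k M) {f : Module.End k M} {N : ℕ} (hf : f ^ N = 0) (w : M) :
    shiftMap k N (observabilityMap φ f N w) = observabilityMap φ f N (f w) := by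
  funext p
  have hshift : (f ^ (p : ℕ)) (f w) = (f ^ ((p : ℕ) + 1)) w := by
    rw [pow_succ, Module.End.mul_apply]
  by_cases hp : (p : ℕ) + 1 < N
  · simp [shiftMap, observabilityMap, hp, hshift]
  · have hlast : (p : ℕ) + 1 = N := by omega
    simp [shiftMap, observabilityMap, hshift, hlast, hf]

namespace MemS'

variable {k : Type*} [Field k] {m n : ℕ} {hn : 1 ≤ n}
  {x : Matrix (Fin (m + 2 * n)) (Fin (m + 2 * n)) k}

theorem row_eq_single (hx : MemS' hn x) {p q : Fin (m + 2 * n)} (hpq : (q : ℕ) = p + 1)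
    (hq : (q : ℕ) ≠ m + n) : x p = Pi.single q 1 := by
  obtain ⟨a, c, b, d, hcol⟩ := hx
  funext v
  have hv := congrFun (hcol v) p
  have hpe : p ≠ ⟨m + n - 1, by omega⟩ := Fin.ne_of_val_ne (by dsimp only; omega)
  have hpf : p ≠ ⟨m + 2 * n - 1, by omega⟩ := Fin.ne_of_val_ne (by dsimp only; omega)
  simp only [Matrix.mulVec_single_one, Matrix.col_apply, Pi.add_apply, Pi.smul_apply,
    Pi.single_eq_of_ne hpe, Pi.single_eq_of_ne hpf, smul_zero, add_zero] at hv
  rw [hv, ite_apply]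
  simp only [Pi.single_apply, Pi.zero_apply, Fin.ext_iff]
  split_ifs <;> first | rfl | omega

theorem mulVec_apply (hx : MemS' hn x) (w : Wt k m n) {p q : Fin (m + 2 * n)}
    (hpq : (q : ℕ) = p + 1) (hq : (q : ℕ) ≠ m + n) : x.mulVec w p = w q := by
  rw [Matrix.mulVec, hx.row_eq_single hpq hq, single_one_dotProduct]

theorem pow_mulVec_apply (hx : MemS' hn x) (w : Wt k m n) {p q : Fin (m + 2 * n)} {j : ℕ}
    (hpq : (q : ℕ) = p + j) (hblock : (q : ℕ) < m + n ∨ m + n ≤ (p : ℕ)) :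
    (x ^ j).mulVec w p = w q := by
  induction j generalizing w q with
  | zero =>
    obtain rfl : q = p := Fin.ext hpq
    simp
  | succ j ih =>
    let r : Fin (m + 2 * n) := ⟨p + j, by omega⟩
    calc (x ^ (j + 1)).mulVec w p = (x ^ j).mulVec (x.mulVec w) p := by
          rw [pow_succ, Matrix.mulVec_mulVec]
      _ = x.mulVec w r := ih (x.mulVec w) rfl (by dsimp only [r]; omega)
      _ = w q := hx.mulVec_apply w (by dsimp only [r]; omega) (by omega)

end MemS'

section SliceLift

variable {k : Type*} [Field k] {m n : ℕ} (hn : 1 ≤ n)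
  (x : Matrix (Fin (m + 2 * n)) (Fin (m + 2 * n)) k)

/-- The lift `W → V` whose two components are the observability maps of the coordinates along
`e₁` and `f₁`; its range is the subspace `L` of the paper. -/
def sliceLift : Wt k m n →ₗ[k] VV k m n :=
  (observabilityMap (LinearMap.proj ⟨0, by omega⟩) x.toLin' (m + 2 * n)).prod
    (observabilityMap (LinearMap.proj ⟨m + n, by omega⟩) x.toLin' (m + 2 * n))

theorem sliceLift_fst_apply (w : Wt k m n) (p : Fin (m + 2 * n)) :
    (sliceLift hn x w).1 p = (x ^ (p : ℕ)).mulVec w ⟨0, by omega⟩ := by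
  simp [sliceLift, observabilityMap, ← Matrix.toLin'_pow]

theorem sliceLift_snd_apply (w : Wt k m n) (p : Fin (m + 2 * n)) :
    (sliceLift hn x w).2 p = (x ^ (p : ℕ)).mulVec w ⟨m + n, by omega⟩ := by
  simp [sliceLift, observabilityMap, ← Matrix.toLin'_pow]

variable {x}

theorem zmap_sliceLift (hnil : IsNilpotent x) (w : Wt k m n) :
    zmap k m n (sliceLift hn x w) = sliceLift hn x (x.mulVec w) := by
  have hpow : x.toLin' ^ (m + 2 * n) = 0 := by
    simpa using pow_finrank_eq_zero_of_isNilpotent ((Matrix.isNilpotent_toLin'_iff x).mpr hnil)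
  simp [zmap, sliceLift, shiftMap_observabilityMap _ hpow]

variable {hn}

theorem Pmap_sliceLift (hx : MemS' hn x) (w : Wt k m n) : Pmap k m n (sliceLift hn x w) = w := by
  funext p
  simp only [Pmap, LinearMap.coe_mk, AddHom.coe_mk, sliceLift_fst_apply, sliceLift_snd_apply]
  split_ifs with hp
  · exact hx.pow_mulVec_apply w (by simp) (.inl hp)
  · exact hx.pow_mulVec_apply w (by dsimp only; omega) (.inr le_rfl)

theorem sliceLift_fst_tail (hx : MemS' hn x) (w : Wt k m n) (t : Fin n) :
    (sliceLift hn x w).1 ⟨m + n + t, by omega⟩ =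
      (x ^ ((t : ℕ) + 1)).mulVec w ⟨m + n - 1, by omega⟩ := by
  have hexp : m + n + (t : ℕ) = (m + n - 1) + (t + 1) := by omega
  rw [sliceLift_fst_apply, congrArg (x ^ ·) hexp, pow_add, ← Matrix.mulVec_mulVec]
  exact hx.pow_mulVec_apply _ (by simp) (.inl (by dsimp only; omega))

theorem sliceLift_snd_tail (hx : MemS' hn x) (w : Wt k m n) (t : Fin (m + n)) :
    (sliceLift hn x w).2 ⟨n + t, by omega⟩ =
      (x ^ ((t : ℕ) + 1)).mulVec w ⟨m + 2 * n - 1, by omega⟩ := by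
  have hexp : n + (t : ℕ) = (n - 1) + (t + 1) := by omega
  rw [sliceLift_snd_apply, congrArg (x ^ ·) hexp, pow_add, ← Matrix.mulVec_mulVec]
  exact hx.pow_mulVec_apply _ (by dsimp only; omega) (.inr le_rfl)

end SliceLift

theorem range_eq_span_single {R ι M : Type*} [Semiring R] [Finite ι] [DecidableEq ι]
    [AddCommMonoid M] [Module R M] (f : (ι → R) →ₗ[R] M) :
    LinearMap.range f = Submodule.span R (Set.range fun i ↦ f (Pi.single i 1)) := by
  rw [LinearMap.range_eq_map, ← (Pi.basisFun R ι).span_eq, Submodule.map_span, ← Set.range_comp]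
  simp [Function.comp_def]

theorem eq_ite_add_sum_smul_single {R : Type*} [Semiring R] {a b N : ℕ} (hN : a + b = N)
    (v : Fin N → R) :
    v = (fun p : Fin N ↦ if (p : ℕ) < a then v p else 0) +
      ∑ t : Fin b, v ⟨a + t, by omega⟩ • Pi.single (⟨a + t, by omega⟩ : Fin N) 1 := by
  subst hN
  funext p
  induction p using Fin.addCases with
  | left p =>
    have hne (t : Fin b) : (p : ℕ) ≠ a + t := by omega
    simp [Finset.sum_apply, Fin.ext_iff, hne]
  | right p =>
    have hidx (t : Fin b) : (⟨a + t, by omega⟩ : Fin (a + b)) = Fin.natAdd a t := rfl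
    simp [Finset.sum_apply, Pi.single_apply, hidx]

theorem iota_Pmap {k : Type*} [Field k] {m n : ℕ} (v : VV k m n) :
    iota k m n (Pmap k m n v) =
      (fun p : Fin _ ↦ if (p : ℕ) < m + n then v.1 p else 0,
        fun p : Fin _ ↦ if (p : ℕ) < n then v.2 p else 0) := by
  have hlt (p : ℕ) : p + (m + n) < m + 2 * n ↔ p < n := by omega
  refine Prod.ext ?_ ?_ <;> funext p <;> simp +contextual [iota, Pmap, hlt]

theorem eq_iota_Pmap_add_sum {k : Type*} [Field k] {m n : ℕ} (v : VV k m n) :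
    v = iota k m n (Pmap k m n v)
      + ∑ t : Fin n, v.1 ⟨m + n + t, by omega⟩ •
          ((Pi.single (⟨m + n + t, by omega⟩ : Fin (m + 2 * n)) 1, 0) : VV k m n)
      + ∑ t : Fin (m + n), v.2 ⟨n + t, by omega⟩ •
          ((0, Pi.single (⟨n + t, by omega⟩ : Fin (m + 2 * n)) 1) : VV k m n) := by
  rw [iota_Pmap]
  refine Prod.ext ?_ ?_
  · simpa [Prod.fst_sum] using eq_ite_add_sum_smul_single (a := m + n) (b := n) (by omega) v.1
  · simpa [Prod.snd_sum] using eq_ite_add_sum_smul_single (a := n) (b := m + n) (by omega) v.2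

/-- **The explicit lift `L` of `W` attached to a nilpotent `x ∈ S′_{m,n}`** (the explicit part
of Lemma `lin` of Nandakumar–Yang).  The vectors `tilde` are, in 1-indexed notation,
`ẽᵢ = eᵢ + Σ_{k=1}^{n} (xᵏ)_{m+n,i} e_{m+n+k} + Σ_{l=1}^{m+n} (xˡ)_{m+2n,i} f_{n+l}` (for the
columns `i ≤ m+n`) and
`f̃ⱼ = fⱼ + Σ_{k=1}^{n} (xᵏ)_{m+n,m+n+j} e_{m+n+k} + Σ_{l=1}^{m+n} (xˡ)_{m+2n,m+n+j} f_{n+l}`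
(for the columns `m+n+j`); their span `L` is `z`-stable, `P` restricts to an isomorphism
`L ≅ W`, and `P ∘ z = x ∘ P` on `L`. -/
theorem explicit_z_stable_lift {k : Type*} [Field k] (m n : ℕ) (hn : 1 ≤ n)
    (x : Matrix (Fin (m + 2*n)) (Fin (m + 2*n)) k)
    (hx : MemS' hn x) (hnil : IsNilpotent x)
    (tilde : Fin (m + 2*n) → VV k m n)
    (htilde : ∀ i : Fin (m + 2*n),
      tilde i = iota k m n (Pi.single i 1)
        + ∑ kk : Fin n, (x ^ ((kk : ℕ) + 1)) ⟨m + n - 1, by omega⟩ i •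
            ((Pi.single (⟨m + n + (kk : ℕ), by have := kk.isLt; omega⟩ : Fin (m + 2*n)) 1, 0)
              : VV k m n)
        + ∑ ll : Fin (m + n), (x ^ ((ll : ℕ) + 1)) ⟨m + 2*n - 1, by omega⟩ i •
            ((0, Pi.single (⟨n + (ll : ℕ), by have := ll.isLt; omega⟩ : Fin (m + 2*n)) 1)
              : VV k m n))
    (L : Submodule k (VV k m n)) (hL : L = Submodule.span k (Set.range tilde)) :
    (∀ v ∈ L, zmap k m n v ∈ L) ∧
    (∀ v ∈ L, Pmap k m n v = 0 → v = 0) ∧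
    Submodule.map (Pmap k m n) L = ⊤ ∧
    ∀ v ∈ L, Pmap k m n (zmap k m n v) = x.mulVec (Pmap k m n v) := by
  have htilde_eq : tilde = fun i ↦ sliceLift hn x (Pi.single i 1) := by
    funext i
    rw [htilde i, eq_iota_Pmap_add_sum (sliceLift hn x (Pi.single i 1))]
    simp only [Pmap_sliceLift hx, sliceLift_fst_tail hx, sliceLift_snd_tail hx,
      Matrix.mulVec_single_one, Matrix.col_apply]
  obtain rfl : L = LinearMap.range (sliceLift hn x) := by
    rw [hL, htilde_eq, range_eq_span_single]
  refine ⟨?_, ?_, ?_, ?_⟩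
  · rintro _ ⟨w, rfl⟩
    exact ⟨x.mulVec w, (zmap_sliceLift hn hnil w).symm⟩
  · rintro _ ⟨w, rfl⟩ hw
    rw [Pmap_sliceLift hx] at hw
    rw [hw, map_zero]
  · exact Submodule.eq_top_iff'.mpr fun w ↦ ⟨_, ⟨w, rfl⟩, Pmap_sliceLift hx w⟩
  · rintro _ ⟨w, rfl⟩
    rw [zmap_sliceLift hn hnil, Pmap_sliceLift hx, Pmap_sliceLift hx]
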